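/- Let q ≥ 3 be an integer and set ν_0 := ((2/q)(1 - 1/q))^2, ν_1 := (2/q)(1 - 1/q)·(1 - (2/q)(1 - 1/q)), and ν_2 := (1 - 1/q)^2. Then for every real constant C > 0 there exists ε > 0 such that (11/12)·ν_0 + ν_1 + ν_2 + C·ε ≤ (q - 1 - ε)·(ν_2 - ε). -/

import Mathlib

/-!
Put `p = (2 / q) * (1 - 1 / q)` and `r = (1 - 1 / q) ^ 2`, so that `ν₀ = p ^ 2`, `ν₁ = p * (1 - p)`
and `ν₂ = r`. Since `w * ν₀ + ν₁ = p - (1 - w) * p ^ 2`, every weight `w < 1` puts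
`w * ν₀ + ν₁ + ν₂` strictly below `p + r`, and `(q - 1) * r - (p + r) = (1 - 1 / q) * (q - 3)` is
nonnegative for `3 ≤ q`; at `q = 3` the whole gap comes from `w < 1`. The strict inequality at
`ε = 0` survives for small `ε > 0`.
-/

theorem mul_sq_add_mul_one_sub_lt {R : Type*} [CommRing R] [LinearOrder R] [IsStrictOrderedRing R]
    {w p : R} (hw : w < 1) (hp : p ≠ 0) : w * p ^ 2 + p * (1 - p) < p :=
  calc w * p ^ 2 + p * (1 - p) = p - (1 - w) * p ^ 2 := by ring
    _ < p := sub_lt_self p (mul_pos (sub_pos.2 hw) (sq_pos_of_ne_zero hp))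

section

variable {K : Type*} [Field K]

/-- The probability `P(X = 1)` for `X` binomial with two trials and success probability
`1 - 1 / q`, used to express `ν₀ = P(X = 1) ^ 2` and `ν₁ = P(X = 1) * (1 - P(X = 1))`.
The parameter `q`, in the paper the number of states, ranges over a field. -/
def probOneSuccess (q : K) : K := 2 / q * (1 - 1 / q)

/-- The probability `ν₂ = P(X = 2)` for `X` binomial with two trials and success probability
`1 - 1 / q`. -/
def probTwoSuccesses (q : K) : K := (1 - 1 / q) ^ 2

theorem sub_one_mul_probTwoSuccesses_sub {q : K} (hq : q ≠ 0) :
    (q - 1) * probTwoSuccesses q - (probOneSuccess q + probTwoSuccesses q) =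
      (1 - 1 / q) * (q - 3) := by
  unfold probOneSuccess probTwoSuccesses
  field_simp
  ring

variable [LinearOrder K] [IsStrictOrderedRing K]

theorem one_sub_one_div_pos {q : K} (hq : 1 < q) : 0 < 1 - 1 / q :=
  sub_pos.2 ((div_lt_one (zero_lt_one.trans hq)).2 hq)

theorem probOneSuccess_pos {q : K} (hq : 1 < q) : 0 < probOneSuccess q :=
  mul_pos (div_pos two_pos (zero_lt_one.trans hq)) (one_sub_one_div_pos hq)

theorem probOneSuccess_add_probTwoSuccesses_le {q : K} (hq : 3 ≤ q) :
    probOneSuccess q + probTwoSuccesses q ≤ (q - 1) * probTwoSuccesses q := by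
  have one_lt_q : 1 < q := by linarith
  rw [← sub_nonneg, sub_one_mul_probTwoSuccesses_sub (zero_lt_one.trans one_lt_q).ne']
  exact mul_nonneg (one_sub_one_div_pos one_lt_q).le (sub_nonneg.2 hq)

theorem exists_pos_add_mul_le_sub_mul_sub {a m r : K} (h : a < m * r) (C : K) :
    ∃ ε : K, 0 < ε ∧ a + C * ε ≤ (m - ε) * (r - ε) := by
  obtain ⟨ε, ε_pos, hε⟩ := exists_pos_mul_lt (sub_pos.2 h) (C + m + r)
  refine ⟨ε, ε_pos, ?_⟩
  calc a + C * ε = a + (C + m + r) * ε - (m + r) * ε := by ring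
    _ ≤ m * r - (m + r) * ε := by linarith
    _ ≤ m * r - (m + r) * ε + ε ^ 2 := le_add_of_nonneg_right (sq_nonneg ε)
    _ = (m - ε) * (r - ε) := by ring

theorem axelrod_key_inequality_two_features_general {q w : K} (hq : 3 ≤ q) (hw : w < 1) (C : K) :
    ∃ ε : K, 0 < ε ∧
      w * probOneSuccess q ^ 2 + probOneSuccess q * (1 - probOneSuccess q) +
          probTwoSuccesses q + C * ε ≤
        (q - 1 - ε) * (probTwoSuccesses q - ε) := by
  have p_pos : 0 < probOneSuccess q := probOneSuccess_pos (by linarith)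
  have strict_at_zero : w * probOneSuccess q ^ 2 + probOneSuccess q * (1 - probOneSuccess q) +
      probTwoSuccesses q < (q - 1) * probTwoSuccesses q :=
    (add_lt_add_left (mul_sq_add_mul_one_sub_lt hw p_pos.ne') _).trans_le
      (probOneSuccess_add_probTwoSuccesses_le hq)
  exact exists_pos_add_mul_le_sub_mul_sub strict_at_zero C

end

/-- Let `q ≥ 3` be an integer and set `ν₀ := ((2/q)(1 - 1/q))²`,
`ν₁ := (2/q)(1 - 1/q)(1 - (2/q)(1 - 1/q))` and `ν₂ := (1 - 1/q)²`. Then for every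
real `C > 0` there exists `ε > 0` such that
`(11/12) ν₀ + ν₁ + ν₂ + C ε ≤ (q - 1 - ε)(ν₂ - ε)`. -/
theorem axelrod_key_inequality_two_features (q : ℕ) (hq : 3 ≤ q) :
    ∀ C : ℝ, 0 < C → ∃ ε : ℝ, 0 < ε ∧
      (11 / 12) * ((2 / (q : ℝ)) * (1 - 1 / q)) ^ 2 +
          (2 / (q : ℝ)) * (1 - 1 / q) * (1 - (2 / q) * (1 - 1 / q)) +
          (1 - 1 / (q : ℝ)) ^ 2 + C * ε ≤
        ((q : ℝ) - 1 - ε) * ((1 - 1 / q) ^ 2 - ε) :=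
  fun C _ => axelrod_key_inequality_two_features_general (Nat.ofNat_le_cast.2 hq) (by norm_num) C
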